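/- Let n be a positive integer with n ≡ 4 (mod 8), let τ, A, A_C be integers, and set Q = (−B_{n/2} − B_{n/4})/(B_{n/2}·B_{n/4}) ∈ ℚ. If the equation A_C = 2n·(1 + 1/B_{n/2} + ((2^{n-1}−1)/(2^{n/2}−1)^2)·Q)·A + (1/(2^{n/2}−1)^2)·Q·(n·τ/2^n) holds in ℚ, then the rational number ((B_{n/2} + B_{n/4})/(B_{n/2}·B_{n/4}))·(τ/2^{n−2}) is a 2-adic integer, i.e., its denominator in lowest terms is odd. -/

import Mathlib

/-- The topologists' Bernoulli number `B_k`: the absolute value of the `(2k)`-th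
Bernoulli number, so `topB 1 = 1/6`, `topB 2 = 1/30`, etc. -/
def topB (k : ℕ) : ℚ := |bernoulli (2 * k)|

/-!
By von Staudt–Clausen, every `B_k` with `k > 0` has exactly one factor `2` in its denominator, so
`1 / B_{n/2}`, `1 / B_{n/4}` and their sum `-Q` are 2-adic integers. In the given equation this
makes the coefficient of `A` a 2-adic integer, hence also the remaining term in `τ`. Since `n / 4`
and `2 ^ (n / 2) - 1` are odd, that term differs from the number in question by a 2-adic unit.
-/

section PadicValuation

open WithZero

variable {p : ℕ} [Fact p.Prime]

theorem one_div_prime_mem_integer {q : ℕ} (hq : q.Prime) (hqp : q ≠ p) :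
    (1 / q : ℚ) ∈ (Rat.padicValuation p).integer := by
  have hpq : ¬ p ∣ q := fun h ↦ hqp ((Nat.prime_dvd_prime_iff_eq Fact.out hq).1 h).symm
  rwa [Valuation.mem_integer_iff, Rat.padicValuation_le_one_iff, one_div,
    Rat.inv_natCast_den_of_pos hq.pos]

theorem bernoulli_add_one_div_mem_integer {k : ℕ} (hk : k ≠ 0) (hp : p - 1 ∣ 2 * k) :
    bernoulli (2 * k) + 1 / p ∈ (Rat.padicValuation p).integer := by
  obtain ⟨z, hz⟩ := Bernoulli.vonStaudt_clausen k
  have hp_mem : p ∈ {q ∈ Finset.range (2 * k + 2) | q.Prime ∧ q - 1 ∣ 2 * k} := by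
    have hp_le : p - 1 ≤ 2 * k := Nat.le_of_dvd (by positivity) hp
    simp only [Finset.mem_filter, Finset.mem_range]
    exact ⟨by lia, Fact.out, hp⟩
  rw [← Finset.add_sum_erase _ _ hp_mem, ← add_assoc] at hz
  rw [← sub_eq_of_eq_add hz]
  refine sub_mem (intCast_mem _ z) (sum_mem fun q hq ↦ ?_)
  obtain ⟨hqp, hq_mem⟩ := Finset.mem_erase.1 hq
  exact one_div_prime_mem_integer (Finset.mem_filter.1 hq_mem).2.1 hqp

theorem padicValuation_bernoulli {k : ℕ} (hk : k ≠ 0) (hp : p - 1 ∣ 2 * k) :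
    Rat.padicValuation p (bernoulli (2 * k)) = exp 1 := by
  have h_inv : Rat.padicValuation p (1 / p) = exp 1 := by
    rw [one_div, map_inv₀, Rat.padicValuation_self, exp_neg, inv_inv]
  have h_lt : Rat.padicValuation p (bernoulli (2 * k) + 1 / p) < Rat.padicValuation p (1 / p) := by
    rw [h_inv]
    exact (bernoulli_add_one_div_mem_integer hk hp).trans_lt (exp_lt_exp.2 zero_lt_one)
  rw [← add_sub_cancel_right (bernoulli (2 * k)) (1 / p : ℚ),
    Valuation.map_sub_eq_of_lt_right _ h_lt, h_inv]

theorem padicValuation_topB {k : ℕ} (hk : k ≠ 0) (hp : p - 1 ∣ 2 * k) :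
    Rat.padicValuation p (topB k) = exp 1 := by
  rw [← padicValuation_bernoulli hk hp, topB]
  rcases abs_choice (bernoulli (2 * k)) with h | h
  · rw [h]
  · rw [h, Valuation.map_neg]

theorem one_div_topB_mem_integer {k : ℕ} (hk : k ≠ 0) (hp : p - 1 ∣ 2 * k) :
    1 / topB k ∈ (Rat.padicValuation p).integer := by
  rw [Valuation.mem_integer_iff, one_div, map_inv₀, padicValuation_topB hk hp, ← exp_neg,
    ← exp_zero, exp_le_exp]
  exact neg_one_lt_zero.le

theorem topB_ne_zero {k : ℕ} (hk : k ≠ 0) : topB k ≠ 0 := by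
  rw [← (Rat.padicValuation 2).ne_zero_iff, padicValuation_topB hk (one_dvd _)]
  exact exp_ne_zero

theorem topB_add_topB_div_mem_integer {i j : ℕ} (hi : i ≠ 0) (hj : j ≠ 0)
    (hpi : p - 1 ∣ 2 * i) (hpj : p - 1 ∣ 2 * j) :
    (topB i + topB j) / (topB i * topB j) ∈ (Rat.padicValuation p).integer := by
  rw [← one_div_add_one_div (topB_ne_zero hi) (topB_ne_zero hj)]
  exact add_mem (one_div_topB_mem_integer hi hpi) (one_div_topB_mem_integer hj hpj)

end PadicValuation

theorem mem_integer_padicValuation_two_iff {x : ℚ} :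
    x ∈ (Rat.padicValuation 2).integer ↔ Odd x.den := by
  rw [Valuation.mem_integer_iff, Rat.padicValuation_le_one_iff, ← even_iff_two_dvd,
    Nat.not_even_iff_odd]

theorem padicValuation_two_intCast_eq_one_iff {a : ℤ} :
    Rat.padicValuation 2 a = 1 ↔ Odd a := by
  rw [Rat.padicValuation_cast, Int.padicValuation_eq_one_iff, Nat.cast_ofNat, ← even_iff_two_dvd,
    Int.not_even_iff_odd]

theorem padicValuation_two_two_pow_sub_one_eq_one {k : ℕ} (hk : k ≠ 0) :
    Rat.padicValuation 2 (2 ^ k - 1) = 1 := by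
  exact_mod_cast padicValuation_two_intCast_eq_one_iff.2
    ((even_two.pow_of_ne_zero hk).sub_odd odd_one)

theorem padicValuation_two_natCast_mul_div_two_pow {n : ℕ} (h8 : n % 8 = 4) (x : ℚ) :
    Rat.padicValuation 2 (n * x / 2 ^ n) = Rat.padicValuation 2 (x / 2 ^ (n - 2)) := by
  obtain ⟨m, hm, rfl⟩ : ∃ m, Odd m ∧ n = 4 * m := ⟨n / 4, by grind, by lia⟩
  have h_two_pow : (2 : ℚ) ^ (4 * m) = 4 * 2 ^ (4 * m - 2) := by
    rw [← pow_sub_mul_pow (2 : ℚ) (show 2 ≤ 4 * m by lia)]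
    ring
  have h_unit : Rat.padicValuation 2 m = 1 := by
    exact_mod_cast padicValuation_two_intCast_eq_one_iff.2 ((Int.odd_coe_nat m).2 hm)
  have h_split : (4 * m : ℕ) * x / 2 ^ (4 * m) = m * (x / 2 ^ (4 * m - 2)) := by
    rw [h_two_pow]
    push_cast
    field_simp
  rw [h_split, map_mul, h_unit, one_mul]

theorem two_adic_integer_of_eq_mod_eight_general (n : ℕ) (h8 : n % 8 = 4)
    (τ A A_C : ℚ) (hA : Odd A.den) (hA_C : Odd A_C.den)
    (Q : ℚ)
    (hQ : Q = (-topB (n / 2) - topB (n / 4)) / (topB (n / 2) * topB (n / 4)))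
    (heq : A_C =
      2 * n * (1 + 1 / topB (n / 2)
          + ((2 ^ (n - 1) - 1) / (2 ^ (n / 2) - 1) ^ 2) * Q) * A
        + (1 / (2 ^ (n / 2) - 1) ^ 2) * Q * (n * τ / 2 ^ n)) :
    Odd (((topB (n / 2) + topB (n / 4)) / (topB (n / 2) * topB (n / 4))
      * (τ / 2 ^ (n - 2))).den) := by
  rw [← mem_integer_padicValuation_two_iff] at hA hA_C ⊢
  have h_half : n / 2 ≠ 0 := by lia
  have h_quarter : n / 4 ≠ 0 := by lia
  have hS := topB_add_topB_div_mem_integer (p := 2) h_half h_quarter (one_dvd _) (one_dvd _)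
  have hB := one_div_topB_mem_integer (p := 2) h_half (one_dvd _)
  set S := (topB (n / 2) + topB (n / 4)) / (topB (n / 2) * topB (n / 4)) with hS_def
  obtain rfl : Q = -S := by rw [hQ, hS_def]; ring
  have hu := padicValuation_two_two_pow_sub_one_eq_one h_half
  have hw := padicValuation_two_two_pow_sub_one_eq_one (show n - 1 ≠ 0 by lia)
  have h_quot : ((2 ^ (n - 1) - 1) / (2 ^ (n / 2) - 1) ^ 2 : ℚ) ∈
      (Rat.padicValuation 2).integer := by
    simp [Valuation.mem_integer_iff, hu, hw]
  have h_coeff : 2 * n * (1 + 1 / topB (n / 2)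
      + ((2 ^ (n - 1) - 1) / (2 ^ (n / 2) - 1) ^ 2) * -S) * A ∈ (Rat.padicValuation 2).integer :=
    mul_mem (mul_mem (mul_mem (ofNat_mem _ 2) (natCast_mem _ n))
      (add_mem (add_mem (one_mem _) hB) (mul_mem h_quot (neg_mem hS)))) hA
  have h_term : (1 / (2 ^ (n / 2) - 1) ^ 2) * -S * (n * τ / 2 ^ n) ∈
      (Rat.padicValuation 2).integer := by
    simpa only [heq, add_sub_cancel_left] using sub_mem hA_C h_coeff
  simpa only [Valuation.mem_integer_iff, map_mul, map_div₀, map_one, map_pow, hu, one_pow, div_one,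
    one_mul, Valuation.map_neg, padicValuation_two_natCast_mul_div_two_pow h8] using h_term

/-- Let `n ≡ 4 (mod 8)` be positive and `τ, A, A_C` integers.  Set
`Q = (-B_{n/2} - B_{n/4}) / (B_{n/2} B_{n/4})`.  If
`A_C = 2n (1 + 1/B_{n/2} + ((2^(n-1)-1)/(2^(n/2)-1)^2) Q) A
      + (1/(2^(n/2)-1)^2) Q (n τ / 2^n)`
holds in `ℚ`, then `((B_{n/2} + B_{n/4})/(B_{n/2} B_{n/4})) * (τ / 2^(n-2))` is a
2-adic integer, i.e. its denominator in lowest terms is odd. -/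
theorem two_adic_integer_of_eq_mod_eight (n : ℕ) (hn : 0 < n) (h8 : n % 8 = 4)
    (τ A A_C : ℤ)
    (Q : ℚ)
    (hQ : Q = (-topB (n / 2) - topB (n / 4)) / (topB (n / 2) * topB (n / 4)))
    (heq : (A_C : ℚ) =
      2 * n * (1 + 1 / topB (n / 2)
          + ((2 ^ (n - 1) - 1) / (2 ^ (n / 2) - 1) ^ 2) * Q) * A
        + (1 / (2 ^ (n / 2) - 1) ^ 2) * Q * (n * τ / 2 ^ n)) :
    Odd (((topB (n / 2) + topB (n / 4)) / (topB (n / 2) * topB (n / 4))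
      * (τ / 2 ^ (n - 2))).den) := by
  exact two_adic_integer_of_eq_mod_eight_general n h8 τ A A_C (by simp) (by simp) Q hQ heq
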